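/- Let U be a finite set, m ≤ |U| a positive integer, c > 0, and f a real-valued function on the m-element subsets of U such that |f(S) − f(T)| ≤ c whenever |S| = |T| = m and |S ∩ T| = m − 1. Let S be a uniformly random m-element subset of U. Then for all α > 0, Pr( |f(S) − E f(S)| ≥ α c √m ) ≤ 2 exp(−2α²). -/

import Mathlib

open Finset

noncomputable def avgS {U : Type*} [DecidableEq U] (A : Finset U) (m : ℕ) (F : Finset U → ℝ) : ℝ :=
  (∑ T ∈ A.powersetCard m, F T) / ((A.powersetCard m).card : ℝ)

lemma hoeff {U : Type*} [Fintype U] [DecidableEq U] (A : Finset U) (hA : A.Nonempty) (g : U → ℝ)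
    (c : ℝ) (hc : 0 < c) (hg : ∀ x ∈ A, ∀ y ∈ A, g x - g y ≤ c) (l : ℝ) :
    (∑ x ∈ A, Real.exp (l * (g x - (∑ y ∈ A, g y) / A.card))) / A.card
      ≤ Real.exp (l ^ 2 * c ^ 2 / 8) := by
  letI : MeasurableSpace U := ⊤
  haveI : DiscreteMeasurableSpace U := ⟨fun _ => trivial⟩
  let p := PMF.uniformOfFinset A hA
  have hint : ∀ F : U → ℝ, ∫ x, F x ∂p.toMeasure = (∑ x ∈ A, F x) / A.card := by
    intro F
    rw [PMF.integral_eq_sum, Finset.sum_div]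
    rw [← Finset.sum_subset (Finset.subset_univ A)]
    · apply Finset.sum_congr rfl
      intro x hx
      simp [p, PMF.uniformOfFinset_apply, hx]
      ring
    · intro x _ hx
      simp [p, PMF.uniformOfFinset_apply, hx]
  obtain ⟨z, hz, hmin⟩ := Finset.exists_min_image A g hA
  have hX : ∀ᵐ x ∂p.toMeasure, g x ∈ Set.Icc (g z) (g z + c) := by
    rw [MeasureTheory.ae_iff, PMF.toMeasure_apply_eq_zero_iff _ (MeasurableSet.of_discrete)]
    rw [Set.disjoint_left]
    intro x hx hx'
    rw [PMF.mem_support_uniformOfFinset_iff] at hx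
    apply hx'
    exact ⟨hmin x hx, by linarith [hg x hx z hz]⟩
  have h := (ProbabilityTheory.hasSubgaussianMGF_of_mem_Icc
    (μ := p.toMeasure) (measurable_of_finite g).aemeasurable hX).mgf_le l
  unfold ProbabilityTheory.mgf at h
  rw [hint, hint] at h
  refine h.trans (le_of_eq ?_)
  congr 1
  simp [abs_of_pos hc]
  ring

lemma avgS_mono {U : Type*} [DecidableEq U] (A : Finset U) (m : ℕ) (F G : Finset U → ℝ)
    (h : ∀ S ∈ A.powersetCard m, F S ≤ G S) : avgS A m F ≤ avgS A m G := by
  unfold avgS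
  gcongr with S hS
  exact h S hS

lemma sum_step {U : Type*} [DecidableEq U] (A : Finset U) (m : ℕ) (F : Finset U → ℝ) :
    ∑ x ∈ A, ∑ T ∈ (A.erase x).powersetCard m, F (insert x T) =
      (m + 1) * ∑ S ∈ A.powersetCard (m + 1), F S := by
  have : (m + 1) * ∑ S ∈ A.powersetCard (m + 1), F S =
      ∑ S ∈ A.powersetCard (m + 1), ∑ x ∈ S, F S := by
    rw [Finset.mul_sum]
    apply Finset.sum_congr rfl
    intro S hS
    rw [Finset.mem_powersetCard] at hS
    simp [hS.2]
  rw [this, Finset.sum_sigma', Finset.sum_sigma']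
  refine Finset.sum_bij' (fun p _ => ⟨insert p.1 p.2, p.1⟩) (fun p _ => ⟨p.2, p.1.erase p.2⟩)
    ?_ ?_ ?_ ?_ ?_
  · rintro ⟨x, T⟩ h
    simp only [Finset.mem_sigma, Finset.mem_powersetCard, Finset.subset_erase] at h ⊢
    obtain ⟨h1, ⟨h2, h3⟩, h4⟩ := h
    exact ⟨⟨Finset.insert_subset h1 h2, by rw [Finset.card_insert_of_notMem h3, h4]⟩, by simp⟩
  · rintro ⟨S, x⟩ h
    simp only [Finset.mem_sigma, Finset.mem_powersetCard] at h ⊢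
    obtain ⟨⟨h1, h2⟩, h3⟩ := h
    exact ⟨h1 h3, Finset.erase_subset_erase _ h1, by rw [Finset.card_erase_of_mem h3, h2]; rfl⟩
  · rintro ⟨x, T⟩ h
    simp only [Finset.mem_sigma, Finset.mem_powersetCard, Finset.subset_erase] at h ⊢
    simp [Finset.erase_insert h.2.1.2]
  · rintro ⟨S, x⟩ h
    simp only [Finset.mem_sigma, Finset.mem_powersetCard] at h ⊢
    simp [Finset.insert_erase h.2]
  · rintro ⟨x, T⟩ h
    rfl

lemma avgS_step {U : Type*} [DecidableEq U] (A : Finset U) (m : ℕ) (hm : m + 1 ≤ A.card)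
    (F : Finset U → ℝ) :
    avgS A (m + 1) F =
      (∑ x ∈ A, avgS (A.erase x) m (fun T => F (insert x T))) / A.card := by
  have h1 : ∑ x ∈ A, avgS (A.erase x) m (fun T => F (insert x T)) =
      (∑ x ∈ A, ∑ T ∈ (A.erase x).powersetCard m, F (insert x T)) / ((A.card - 1).choose m : ℝ) := by
    rw [Finset.sum_div]
    apply Finset.sum_congr rfl
    intro x hx
    simp [avgS, Finset.card_powersetCard, Finset.card_erase_of_mem hx]
  rw [h1, sum_step]
  unfold avgS
  rw [Finset.card_powersetCard]
  obtain ⟨n, hn⟩ : ∃ n, A.card = n + 1 := ⟨A.card - 1, by omega⟩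
  have h2 := Nat.add_one_mul_choose_eq n m
  have h3 : 0 < n.choose m := Nat.choose_pos (by omega)
  have h4 : 0 < (n+1).choose (m+1) := Nat.choose_pos (by omega)
  have h2' : ((n:ℝ) + 1) * (n.choose m : ℝ) = ((n+1).choose (m+1) : ℝ) * (m + 1) := by
    exact_mod_cast h2
  rw [hn, Nat.add_sub_cancel]
  have h3' : (0:ℝ) < n.choose m := by exact_mod_cast h3
  have h4' : (0:ℝ) < (n+1).choose (m+1) := by exact_mod_cast h4
  rw [div_div, div_eq_div_iff h4'.ne' (by positivity)]
  push_cast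
  linear_combination (∑ S ∈ A.powersetCard (m + 1), F S) * h2'

lemma avgS_swap {U : Type*} [DecidableEq U] (A : Finset U) (m : ℕ) (F : Finset U → ℝ) (c : ℝ)
    (hc : 0 < c) (hm : m + 1 ≤ A.card)
    (hF : ∀ S ⊆ A, ∀ T ⊆ A, S.card = m + 1 → T.card = m + 1 → (S ∩ T).card = m → |F S - F T| ≤ c)
    (x : U) (hx : x ∈ A) (y : U) (hy : y ∈ A) :
    avgS (A.erase x) m (fun T => F (insert x T)) - avgS (A.erase y) m (fun T => F (insert y T))
      ≤ c := by
  rcases eq_or_ne x y with rfl | hxy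
  · simpa using hc.le
  let e := Equiv.swap x y
  have hmap : (A.erase y) = (A.erase x).map e.toEmbedding := by
    ext z
    rw [Finset.mem_map_equiv]
    simp only [Finset.mem_erase, e, Equiv.symm_swap]
    rcases eq_or_ne z x with rfl | h1
    · simp [hx, hy, hxy, hxy.symm]
    rcases eq_or_ne z y with rfl | h2
    · simp
    · rw [Equiv.swap_apply_of_ne_of_ne h1 h2]; simp [h1, h2]
  have h2 : avgS (A.erase y) m (fun T => F (insert y T)) =
      avgS (A.erase x) m (fun T => F (insert y (T.map e.toEmbedding))) := by
    unfold avgS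
    rw [hmap, Finset.powersetCard_map]
    simp [Finset.sum_map]
  have hN : 0 < ((A.erase x).powersetCard m).card := by
    rw [Finset.card_powersetCard, Finset.card_erase_of_mem hx]
    exact Nat.choose_pos (by omega)
  have hN' : (0:ℝ) < ((A.erase x).powersetCard m).card := by exact_mod_cast hN
  rw [h2]
  unfold avgS
  rw [← sub_div, ← Finset.sum_sub_distrib, div_le_iff₀ hN']
  rw [mul_comm, ← nsmul_eq_mul]
  apply Finset.sum_le_card_nsmul
  intro T hT
  simp only [Finset.mem_powersetCard, Finset.subset_erase] at hT
  obtain ⟨⟨hTA, hxT⟩, hTm⟩ := hT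
  by_cases hyT : y ∈ T
  · have : insert x T = insert y (T.map e.toEmbedding) := by
      ext z
      simp only [Finset.mem_insert, Finset.mem_map_equiv, e, Equiv.symm_swap]
      rcases eq_or_ne z x with rfl | h1
      · simp [hyT]
      rcases eq_or_ne z y with rfl | h2
      · simp [hyT]
      · rw [Equiv.swap_apply_of_ne_of_ne h1 h2]; simp [h1, h2]
    simp [this, hc.le]
  · have : T.map e.toEmbedding = T := by
      ext z
      simp only [Finset.mem_map_equiv, e, Equiv.symm_swap]
      rcases eq_or_ne z x with rfl | h1
      · simp [hyT, hxT]
      rcases eq_or_ne z y with rfl | h2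
      · simp [hyT, hxT]
      · rw [Equiv.swap_apply_of_ne_of_ne h1 h2]
    rw [this]
    refine (le_abs_self _).trans (hF _ (Finset.insert_subset hx hTA) _ (Finset.insert_subset hy hTA)
      (by rw [Finset.card_insert_of_notMem hxT, hTm]) (by rw [Finset.card_insert_of_notMem hyT, hTm]) ?_)
    rw [← hTm]
    congr 1
    ext z
    simp only [Finset.mem_inter, Finset.mem_insert]
    constructor
    · rintro ⟨rfl | h, h' | h'⟩ <;> first | assumption | (exact absurd h' hxy)
    · tauto

lemma avgS_mul {U : Type*} [DecidableEq U] (A : Finset U) (m : ℕ) (F : Finset U → ℝ) (k : ℝ) :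
    avgS A m (fun S => F S * k) = avgS A m F * k := by
  unfold avgS
  rw [← Finset.sum_mul]; ring

lemma mgf_bound {U : Type*} [Fintype U] [DecidableEq U] (c : ℝ) (hc : 0 < c) (l : ℝ) (m : ℕ) :
    ∀ (A : Finset U) (_ : m ≤ A.card) (F : Finset U → ℝ)
    (_ : ∀ S ⊆ A, ∀ T ⊆ A, S.card = m → T.card = m → (S ∩ T).card + 1 = m → |F S - F T| ≤ c),
    avgS A m (fun S => Real.exp (l * (F S - avgS A m F))) ≤ Real.exp (m * (l ^ 2 * c ^ 2 / 8)) := by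
  induction m with
  | zero => intro A _ F _; simp [avgS]
  | succ m ih =>
    intro A hA F hF
    have hA0 : A.Nonempty := Finset.card_pos.mp (by omega)
    set g : U → ℝ := fun x => avgS (A.erase x) m (fun T => F (insert x T)) with hg
    have hE : avgS A (m + 1) F = (∑ x ∈ A, g x) / A.card := avgS_step A m hA F
    have hH := hoeff A hA0 g c hc (fun x hx y hy => avgS_swap A m F c hc hA
      (fun S hS T hT h1 h2 h3 => hF S hS T hT h1 h2 (by omega)) x hx y hy) l
    rw [← hE] at hH
    set E := avgS A (m + 1) F
    rw [avgS_step A m hA]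
    have key : ∀ x ∈ A, avgS (A.erase x) m (fun T => Real.exp (l * (F (insert x T) - E))) ≤
        Real.exp (m * (l ^ 2 * c ^ 2 / 8)) * Real.exp (l * (g x - E)) := by
      intro x hx
      have h1 := ih (A.erase x) (by rw [Finset.card_erase_of_mem hx]; omega)
        (fun T => F (insert x T)) (by
          intro S hS T hT h1 h2 h3
          rw [Finset.subset_erase] at hS hT
          refine hF _ (Finset.insert_subset hx hS.1) _ (Finset.insert_subset hx hT.1)
            (by rw [Finset.card_insert_of_notMem hS.2, h1])
            (by rw [Finset.card_insert_of_notMem hT.2, h2]) ?_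
          rw [← Finset.insert_inter_distrib, Finset.card_insert_of_notMem (by simp [hS.2]), h3])
      have h2 : (fun T => Real.exp (l * (F (insert x T) - E))) =
          fun T => Real.exp (l * (F (insert x T) - g x)) * Real.exp (l * (g x - E)) := by
        funext T
        rw [← Real.exp_add]; congr 1; ring
      rw [h2, avgS_mul]
      exact mul_le_mul_of_nonneg_right h1 (Real.exp_pos _).le
    calc _ ≤ (∑ x ∈ A, Real.exp (m * (l ^ 2 * c ^ 2 / 8)) * Real.exp (l * (g x - E))) / A.card := by
          gcongr with x hx; exact key x hx
      _ = Real.exp (m * (l ^ 2 * c ^ 2 / 8)) * ((∑ x ∈ A, Real.exp (l * (g x - E))) / A.card) := by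
          rw [← Finset.mul_sum]; ring
      _ ≤ Real.exp (m * (l ^ 2 * c ^ 2 / 8)) * Real.exp (l ^ 2 * c ^ 2 / 8) := by gcongr
      _ = _ := by rw [← Real.exp_add]; congr 1; push_cast; ring



open scoped Classical in
/-- McDiarmid-type concentration for functions of a uniformly random `m`-subset. -/
theorem subset_concentration {U : Type*} [Fintype U] [DecidableEq U]
    (m : ℕ) (hm : 0 < m) (hmU : m ≤ Fintype.card U)
    (c : ℝ) (hc : 0 < c) (f : Finset U → ℝ)
    (hf : ∀ S T : Finset U, S.card = m → T.card = m → (S ∩ T).card = m - 1 →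
      |f S - f T| ≤ c)
    (α : ℝ) (hα : 0 < α) :
    (((((Finset.univ : Finset U).powersetCard m)).filter
          (fun S => α * c * Real.sqrt m ≤
            |f S - (∑ T ∈ (Finset.univ : Finset U).powersetCard m, f T) /
              ((((Finset.univ : Finset U).powersetCard m)).card : ℝ)|)).card : ℝ) /
        ((((Finset.univ : Finset U).powersetCard m)).card : ℝ) ≤
      2 * Real.exp (-2 * α ^ 2) := by

  have hF : ∀ S ⊆ (univ : Finset U), ∀ T ⊆ (univ : Finset U), S.card = m → T.card = m →
      (S ∩ T).card + 1 = m → |f S - f T| ≤ c :=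
    fun S _ T _ h1 h2 h3 => hf S T h1 h2 (by omega)
  have hN : 0 < ((univ : Finset U).powersetCard m).card := by
    rw [Finset.card_powersetCard]
    exact Nat.choose_pos (by simpa using hmU)
  have hN' : (0:ℝ) < ((univ : Finset U).powersetCard m).card := by exact_mod_cast hN
  have hs : (0:ℝ) < Real.sqrt m := Real.sqrt_pos.mpr (by exact_mod_cast hm)
  have hss : Real.sqrt m ^ 2 = m := Real.sq_sqrt (by positivity)
  set s := Real.sqrt m
  set l : ℝ := 4 * α / (c * s) with hl
  have hl0 : 0 < l := by positivity
  have e1 : (m:ℝ) * (l ^ 2 * c ^ 2 / 8) = 2 * α ^ 2 := by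
    rw [← hss, hl]; field_simp; norm_num
  have e2 : l * (α * c * s) = 4 * α ^ 2 := by
    rw [hl]; field_simp
  have b1 := mgf_bound c hc l m univ (by simpa using hmU) f hF
  have b2 := mgf_bound c hc (-l) m univ (by simpa using hmU) f hF
  rw [neg_sq, e1] at b2
  rw [e1] at b1
  change _ ≤ _ at b1
  set E := avgS univ m f with hE
  have hE' : (∑ T ∈ (Finset.univ : Finset U).powersetCard m, f T) /
              ((((Finset.univ : Finset U).powersetCard m)).card : ℝ) = E := rfl
  rw [hE']
  unfold avgS at b1 b2
  rw [div_le_iff₀ hN'] at b1 b2 ⊢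
  have hcard : ((((Finset.univ : Finset U).powersetCard m).filter
      (fun S => α * c * s ≤ |f S - E|)).card : ℝ) * Real.exp (4 * α ^ 2) ≤
      ∑ S ∈ (Finset.univ : Finset U).powersetCard m,
        (Real.exp (l * (f S - E)) + Real.exp (-l * (f S - E))) := by
    rw [← nsmul_eq_mul]
    refine le_trans (Finset.card_nsmul_le_sum _ (fun S => (Real.exp (l * (f S - E)) + Real.exp (-l * (f S - E)))) _ ?_)
      (Finset.sum_le_sum_of_subset_of_nonneg (Finset.filter_subset _ _)
        (fun S _ _ => by positivity))
    intro S hS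
    have h := (Finset.mem_filter.mp hS).2
    rw [← e2]
    rcases le_abs.mp h with h | h
    · have : Real.exp (l * (α * c * s)) ≤ Real.exp (l * (f S - E)) := by gcongr
      linarith [Real.exp_pos (-l * (f S - E))]
    · have : Real.exp (l * (α * c * s)) ≤ Real.exp (-l * (f S - E)) := by
        rw [neg_mul, ← mul_neg]; gcongr
      linarith [Real.exp_pos (l * (f S - E))]
  rw [Finset.sum_add_distrib] at hcard
  have e3 : Real.exp (-2 * α ^ 2) * Real.exp (4 * α ^ 2) = Real.exp (2 * α ^ 2) := by
    rw [← Real.exp_add]; congr 1; ring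
  refine le_of_mul_le_mul_right ?_ (Real.exp_pos (4 * α ^ 2))
  have e4 : ∀ N : ℝ, 2 * Real.exp (-2 * α ^ 2) * N * Real.exp (4 * α ^ 2) =
      2 * (Real.exp (2 * α ^ 2) * N) := by
    intro N; rw [← e3]; ring
  rw [e4]
  refine hcard.trans ?_
  beta_reduce at b1 b2
  linarith
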